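/- Let δ, Δ be positive integers with δ ≤ Δ, let G be a finite digraph and let A be a set of exactly δ vertices of G, each of out-degree at most Δ − δ. Then there exists a Sybil attack from A creating exactly δ − 1 fake vertices in which the attackers give in total exactly (δ − 1) + binom(δ,2) certifications: the j-th created fake vertex (for 1 ≤ j ≤ δ − 1) receives certifications from exactly δ − j + 1 attackers and from all j − 1 previously created fake vertices. -/

import Mathlib

/-!
The fake vertices `v 0, v 1, …` are distinct elements of the infinite type `V` that are neither
vertices of `G` nor tails of arcs of `G`, so they start with out-degree `0`. The `j`-th
creation (counting from `0`) takes `δ - j` attackers together with the `j` earlier fake vertices, `δ` certifiers in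
all. Since a vertex creation raises every out-degree by at most one (`outDeg_addVertex_le`), before
the `j`-th creation an attacker has out-degree at most `(Δ - δ) + j` and a fake vertex at most `j`;
both are below `Δ` because `j < δ - 1`. The total `δ + (δ - 1) + ⋯ + 2` is evaluated in
`sum_certifications`.
-/

/-- A finite directed graph: a finite set of vertices and a finite set of arcs. -/
structure FinDigraph (V : Type*) where
  verts : Finset V
  arcs : Finset (V × V)

variable {V : Type*}

/-- Out-degree of a vertex: number of arcs leaving it. -/
def FinDigraph.outDeg [DecidableEq V] (G : FinDigraph V) (v : V) : ℕ :=
  (G.arcs.filter (fun a => a.1 = v)).card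

/-- In-degree of a vertex: number of arcs entering it. -/
def FinDigraph.inDeg [DecidableEq V] (G : FinDigraph V) (v : V) : ℕ :=
  (G.arcs.filter (fun a => a.2 = v)).card

/-- The number of available certifications of a set `X` of vertices:
`c(X) = |X|·Δ − Σ_{x∈X} d⁺(x)`. -/
def certAvail [DecidableEq V] (Δ : ℕ) (G : FinDigraph V) (X : Finset V) : ℕ :=
  X.card * Δ - ∑ x ∈ X, G.outDeg x

/-- `reachLE G k u v` : there is a directed path from `u` to `v` of length at most `k`. -/
def reachLE (G : FinDigraph V) : ℕ → V → V → Prop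
  | 0, u, v => u = v
  | k + 1, u, v => reachLE G k u v ∨ ∃ w, reachLE G k u w ∧ (w, v) ∈ G.arcs

/-- `distLE G A k v` : the distance from the set `A` to the vertex `v` is at most `k`,
i.e. there is a directed path of length at most `k` from some vertex of `A` to `v`. -/
def distLE (G : FinDigraph V) (A : Finset V) (k : ℕ) (v : V) : Prop :=
  ∃ a ∈ A, reachLE G k a v

/-- A vertex is referent if both its out-degree and its in-degree are at least `n^(1/d)`,
where `n` is the number of vertices. -/
def isReferent [DecidableEq V] (G : FinDigraph V) (d : ℕ) (v : V) : Prop :=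
  (G.verts.card : ℝ) ^ ((d : ℝ)⁻¹) ≤ (G.outDeg v : ℝ) ∧
  (G.verts.card : ℝ) ^ ((d : ℝ)⁻¹) ≤ (G.inDeg v : ℝ)

/-- `r(G)` : the number of referent vertices of `G`. -/
noncomputable def refCount [DecidableEq V] (G : FinDigraph V) (d : ℕ) : ℕ :=
  {v | v ∈ G.verts ∧ isReferent G d v}.ncard

/-- `r_i(X)` : the number of referent vertices at distance at most `i` to the set `X`. -/
noncomputable def refCountNear [DecidableEq V] (G : FinDigraph V) (d i : ℕ) (X : Finset V) : ℕ :=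
  {v | v ∈ G.verts ∧ isReferent G d v ∧ ∃ x ∈ X, reachLE G i v x}.ncard

/-- The digraph obtained by adding a new vertex `v` with arcs from every vertex of `X` to `v`. -/
def addVertex [DecidableEq V] (G : FinDigraph V) (X : Finset V) (v : V) : FinDigraph V :=
  ⟨insert v G.verts, G.arcs ∪ X.image (fun x => (x, v))⟩

/-- The digraph obtained by adding an arc from `u` to `v`. -/
def addArc [DecidableEq V] (G : FinDigraph V) (u v : V) : FinDigraph V :=
  ⟨G.verts, insert (u, v) G.arcs⟩

/-- One step of a Sybil attack from the attacker set `A`: a state is a pair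
`(current graph, set of fake vertices created so far)`. -/
inductive SybilStep [DecidableEq V] (δ Δ : ℕ) (A : Finset V) :
    FinDigraph V × Finset V → FinDigraph V × Finset V → Prop
  | vertexCreation (G : FinDigraph V) (F : Finset V) (X : Finset V) (v : V)
      (hv : v ∉ G.verts) (hXAF : X ⊆ A ∪ F) (hXG : X ⊆ G.verts)
      (hXcard : δ ≤ X.card) (hXdeg : ∀ x ∈ X, G.outDeg x < Δ) :
      SybilStep δ Δ A (G, F) (addVertex G X v, insert v F)
  | arcCreation (G : FinDigraph V) (F : Finset V) (u v : V)
      (hu : u ∈ A ∪ F) (huG : u ∈ G.verts) (hvG : v ∈ G.verts) (hne : u ≠ v)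
      (hdeg : G.outDeg u < Δ) :
      SybilStep δ Δ A (G, F) (addArc G u v, F)

/-- A Sybil attack from `A` on the initial graph `G`, ending in the graph `G'`
with set of fake vertices `F`. -/
def SybilAttack [DecidableEq V] (δ Δ : ℕ) (A : Finset V) (G G' : FinDigraph V)
    (F : Finset V) : Prop :=
  Relation.ReflTransGen (SybilStep δ Δ A) (G, ∅) (G', F)

/-- One step of a *valid* Sybil attack: vertex creations must moreover satisfy the
distance rule `r_{d-1}(X) ≥ α·r(G)` in the current graph. -/
inductive ValidSybilStep [DecidableEq V] (δ Δ d : ℕ) (α : ℝ) (A : Finset V) :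
    FinDigraph V × Finset V → FinDigraph V × Finset V → Prop
  | vertexCreation (G : FinDigraph V) (F : Finset V) (X : Finset V) (v : V)
      (hv : v ∉ G.verts) (hXAF : X ⊆ A ∪ F) (hXG : X ⊆ G.verts)
      (hXcard : δ ≤ X.card) (hXdeg : ∀ x ∈ X, G.outDeg x < Δ)
      (hdist : α * (refCount G d : ℝ) ≤ (refCountNear G d (d - 1) X : ℝ)) :
      ValidSybilStep δ Δ d α A (G, F) (addVertex G X v, insert v F)
  | arcCreation (G : FinDigraph V) (F : Finset V) (u v : V)
      (hu : u ∈ A ∪ F) (huG : u ∈ G.verts) (hvG : v ∈ G.verts) (hne : u ≠ v)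
      (hdeg : G.outDeg u < Δ) :
      ValidSybilStep δ Δ d α A (G, F) (addArc G u v, F)

/-- A valid Sybil attack from `A` on the initial graph `G`, ending in the graph `G'`
with set of fake vertices `F`. -/
def ValidSybilAttack [DecidableEq V] (δ Δ d : ℕ) (α : ℝ) (A : Finset V)
    (G G' : FinDigraph V) (F : Finset V) : Prop :=
  Relation.ReflTransGen (ValidSybilStep δ Δ d α A) (G, ∅) (G', F)

theorem outDeg_addVertex_le [DecidableEq V] (G : FinDigraph V) (X : Finset V) (v x : V) :
    (addVertex G X v).outDeg x ≤ G.outDeg x + 1 := by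
  unfold FinDigraph.outDeg addVertex
  rw [Finset.filter_union]
  refine (Finset.card_union_le _ _).trans (Nat.add_le_add_left ?_ _)
  -- the only new arc that can leave `x` is `(x, v)`
  rw [Finset.card_le_one]
  simp only [Finset.mem_filter, Finset.mem_image]
  rintro _ ⟨⟨a, -, rfl⟩, rfl⟩ _ ⟨⟨b, -, rfl⟩, h⟩
  simp at h
  simp [h]

theorem sum_certifications (n : ℕ) :
    ∑ j ∈ Finset.range n, (n + 1 - j) = n + Nat.choose (n + 1) 2 := by
  induction n with
  | zero => simp
  | succ n ih =>
    have h : ∑ j ∈ Finset.range n, (n + 1 + 1 - (j + 1)) = n + Nat.choose (n + 1) 2 := by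
      simpa using ih
    have hc : Nat.choose (n + 1 + 1) 2 = (n + 1) + Nat.choose (n + 1) 2 := by
      rw [Nat.choose_succ_succ' (n + 1) 1, Nat.choose_one_right]
    rw [Finset.sum_range_succ', h, hc]
    omega

/-- The successive graphs obtained from `G` when the `j`-th creation adds `v j` with arcs from `B j`
and from all earlier `v i`. -/
def attackGraph [DecidableEq V] (G : FinDigraph V) (v : ℕ → V) (B : ℕ → Finset V) :
    ℕ → FinDigraph V
  | 0 => G
  | j + 1 => addVertex (attackGraph G v B j) (B j ∪ Finset.image v (Finset.range j)) (v j)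

theorem attackGraph_verts [DecidableEq V] (G : FinDigraph V) (v : ℕ → V) (B : ℕ → Finset V)
    (j : ℕ) : (attackGraph G v B j).verts = G.verts ∪ Finset.image v (Finset.range j) := by
  induction j with
  | zero => simp [attackGraph]
  | succ j ih =>
    simp [attackGraph, addVertex, ih, Finset.range_add_one, Finset.image_insert]

theorem attackGraph_outDeg_le [DecidableEq V] (G : FinDigraph V) (v : ℕ → V) (B : ℕ → Finset V)
    (x : V) (j : ℕ) : (attackGraph G v B j).outDeg x ≤ G.outDeg x + j := by
  induction j with
  | zero => simp [attackGraph]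
  | succ j ih =>
    have h := outDeg_addVertex_le (attackGraph G v B j)
      (B j ∪ Finset.image v (Finset.range j)) (v j) x
    simp only [attackGraph]
    omega

/-- Fresh vertices must also avoid tails of arcs of `G`: the arcs of a `FinDigraph` are not required
to join its vertices. -/
theorem exists_fresh [DecidableEq V] [Infinite V] (G : FinDigraph V) :
    ∃ v : ℕ → V, Function.Injective v ∧ (∀ j, v j ∉ G.verts) ∧ ∀ j, G.outDeg (v j) = 0 := by
  let S : Finset V := G.verts ∪ G.arcs.image Prod.fst
  have : Infinite {x // x ∉ S} := S.finite_toSet.infinite_compl.to_subtype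
  let f := Infinite.natEmbedding {x // x ∉ S}
  refine ⟨fun j => f j, fun i j h => f.injective (Subtype.ext h), fun j h => ?_, fun j => ?_⟩
  · exact (f j).2 (Finset.mem_union_left _ h)
  · rw [FinDigraph.outDeg, Finset.card_eq_zero, Finset.filter_eq_empty_iff]
    intro a ha h
    exact (f j).2 (Finset.mem_union_right _ (Finset.mem_image.2 ⟨a, ha, h⟩))

/-- **Step 1 of the optimal Sybil strategy.** If `A` has exactly `δ` vertices, each of
out-degree at most `Δ − δ`, then there is a Sybil attack from `A` creating exactly `δ − 1`
fake vertices in which the attackers give in total exactly `(δ − 1) + binom(δ,2)`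
certifications: the `j`-th created fake vertex receives certifications from exactly
`δ − j + 1` attackers and from all `j − 1` previously created fake vertices.
(Here the fake vertices are `v 0, …, v (δ-2)`, so the `j`-th one, `1 ≤ j ≤ δ−1`, is
`v (j-1)`: it receives certifications from the `δ - (j-1)` attackers of `B (j-1)` and from
the previous fake vertices `v 0, …, v (j-2)`.) -/
theorem sybil_step_one {V : Type*} [DecidableEq V] [Infinite V]
    (δ Δ : ℕ) (hδ : 0 < δ) (hΔ : 0 < Δ) (hδΔ : δ ≤ Δ)
    (G : FinDigraph V) (A : Finset V) (hA : A ⊆ G.verts) (hAcard : A.card = δ)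
    (hdeg : ∀ a ∈ A, G.outDeg a ≤ Δ - δ) :
    ∃ (v : ℕ → V) (B : ℕ → Finset V) (Gs : ℕ → FinDigraph V),
      Gs 0 = G ∧
      (∀ j, j < δ - 1 → v j ∉ (Gs j).verts) ∧
      Function.Injective (fun j : Fin (δ - 1) => v j) ∧
      (∀ j, j < δ - 1 → B j ⊆ A ∧ (B j).card = δ - j) ∧
      (∀ j, j < δ - 1 →
        SybilStep δ Δ A (Gs j, Finset.image v (Finset.range j))
          (Gs (j + 1), Finset.image v (Finset.range (j + 1))) ∧
        Gs (j + 1) = addVertex (Gs j) (B j ∪ Finset.image v (Finset.range j)) (v j)) ∧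
      SybilAttack δ Δ A G (Gs (δ - 1)) (Finset.image v (Finset.range (δ - 1))) ∧
      (∑ j ∈ Finset.range (δ - 1), (B j).card) = (δ - 1) + Nat.choose δ 2 := by
  obtain ⟨v, hinj, hfresh, hzero⟩ := exists_fresh G
  have hB : ∀ j, ∃ B ⊆ A, B.card = δ - j := fun j =>
    Finset.exists_subset_card_eq (by omega)
  choose B hBA hBcard using hB
  have hnew : ∀ j, v j ∉ (attackGraph G v B j).verts := by
    intro j
    rw [attackGraph_verts, Finset.mem_union, not_or]
    refine ⟨hfresh j, fun h => ?_⟩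
    obtain ⟨i, hi, hij⟩ := Finset.mem_image.1 h
    have := hinj hij
    simp at hi
    omega
  have hstep : ∀ j, j < δ - 1 →
      SybilStep δ Δ A (attackGraph G v B j, Finset.image v (Finset.range j))
        (attackGraph G v B (j + 1), Finset.image v (Finset.range (j + 1))) := by
    intro j hj
    rw [Finset.range_add_one, Finset.image_insert]
    refine SybilStep.vertexCreation _ _ _ _ (hnew j)
      (Finset.union_subset_union_left (hBA j)) ?_ ?_ ?_
    · rw [attackGraph_verts]
      exact Finset.union_subset_union_left ((hBA j).trans hA)
    · rw [Finset.card_union_of_disjoint, hBcard, Finset.card_image_of_injective _ hinj,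
        Finset.card_range]
      · omega
      · rw [Finset.disjoint_left]
        intro x hx h
        obtain ⟨i, -, rfl⟩ := Finset.mem_image.1 h
        exact hfresh i (hA (hBA j hx))
    · intro x hx
      have hle := attackGraph_outDeg_le G v B x j
      rcases Finset.mem_union.1 hx with h | h
      · have := hdeg x (hBA j h)
        omega
      · obtain ⟨i, -, rfl⟩ := Finset.mem_image.1 h
        have := hzero i
        omega
  refine ⟨v, B, attackGraph G v B, rfl, fun j _ => hnew j,
    fun i j h => Fin.ext (hinj h), fun j _ => ⟨hBA j, hBcard j⟩,
    fun j hj => ⟨hstep j hj, rfl⟩, ?_, ?_⟩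
  · have hreach : ∀ j, j ≤ δ - 1 →
        SybilAttack δ Δ A G (attackGraph G v B j) (Finset.image v (Finset.range j)) := by
      intro j
      induction j with
      | zero => intro _; exact Relation.ReflTransGen.refl
      | succ j ih => intro hj; exact (ih (by omega)).tail (hstep j (by omega))
    exact hreach _ le_rfl
  · obtain ⟨n, rfl⟩ : ∃ n, δ = n + 1 := ⟨δ - 1, by omega⟩
    simp only [hBcard]
    exact sum_certifications n
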